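/- For every nonzero λ₀ ∈ ℂ, the linear map sending u ∈ ℂ^n to the vector (λ₀u, G*u) ∈ ℂ^{n+r} restricts to a linear isomorphism from the nullspace of P(λ₀) onto the nullspace of S(λ₀). In particular, for every nonzero λ₀ the geometric multiplicities of λ₀ as an eigenvalue of P and of S coincide. -/

import Mathlib

open Matrix ComplexOrder

/-!
Write `H` for `G*`. The second block row of `S(z) (x, y) = 0` reads `H x = z y`. For invertible `z`
it says that `(x, y) = (z u, H u)` with `u = z⁻¹ x`, and on vectors of this form the first block row
is `P(z) u = 0`.
-/

section QuadraticLinearization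

variable {R l m k : Type*} [CommRing R]

/-- The value at `z` of the quadratic matrix polynomial `P(z) = z² M + z D + G H`, whose constant
coefficient is given in factored form. The coefficients may be rectangular, and an arbitrary `H`
takes the place of the adjoint of `G`. -/
def quadraticPoly [Fintype k] (M D : Matrix l m R) (G : Matrix l k R) (H : Matrix k m R) (z : R) :
    Matrix l m R :=
  z ^ 2 • M + z • D + G * H

/-- The value at `z` of the pencil `S(z) = z diag(M, -I) + [[D, G], [H, 0]]` that linearizes
`quadraticPoly M D G H`. -/
def linearizationPencil [DecidableEq k] (M D : Matrix l m R) (G : Matrix l k R)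
    (H : Matrix k m R) (z : R) : Matrix (l ⊕ k) (m ⊕ k) R :=
  z • fromBlocks M 0 0 (-1) + fromBlocks D G H 0

/-- The map `u ↦ (z u, H u)`, which carries null vectors of `quadraticPoly M D G H z` to null
vectors of `linearizationPencil M D G H z`. -/
def nullVectorLift [Fintype m] (H : Matrix k m R) (z : R) : (m → R) →ₗ[R] (m ⊕ k → R) :=
  (LinearEquiv.sumArrowLequivProdArrow m k R R).symm ∘ₗ (z • LinearMap.id).prod H.mulVecLin

theorem sumElim_eq_zero_iff {α β γ : Type*} [Zero γ] {f : α → γ} {g : β → γ} :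
    Sum.elim f g = 0 ↔ f = 0 ∧ g = 0 := by
  simp [funext_iff]

theorem nullVectorLift_apply [Fintype m] (H : Matrix k m R) (z : R) (u : m → R) :
    nullVectorLift H z u = Sum.elim (z • u) (H *ᵥ u) :=
  rfl

theorem nullVectorLift_injective [Fintype m] (H : Matrix k m R) {z : R}
    (hz : IsSMulRegular R z) : Function.Injective (nullVectorLift H z) := by
  refine (injective_iff_map_eq_zero _).2 fun u hu => ?_
  rw [nullVectorLift_apply, sumElim_eq_zero_iff] at hu
  exact (IsSMulRegular.pi fun _ => hz).right_eq_zero_of_smul hu.1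

variable [DecidableEq k] (M D : Matrix l m R) (G : Matrix l k R) (H : Matrix k m R)

theorem linearizationPencil_eq_fromBlocks (z : R) :
    linearizationPencil M D G H z = fromBlocks (z • M + D) G H (-(z • 1)) := by
  simp [linearizationPencil, fromBlocks_smul, fromBlocks_add]

variable [Fintype m] [Fintype k]

theorem linearizationPencil_mulVec_elim (z : R) (x : m → R) (y : k → R) :
    linearizationPencil M D G H z *ᵥ Sum.elim x y =
      Sum.elim ((z • M + D) *ᵥ x + G *ᵥ y) (H *ᵥ x - z • y) := by
  simp [linearizationPencil_eq_fromBlocks, fromBlocks_mulVec, neg_mulVec, smul_mulVec,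
    sub_eq_add_neg]

theorem linearizationPencil_mulVec_nullVectorLift (z : R) (u : m → R) :
    linearizationPencil M D G H z *ᵥ nullVectorLift H z u =
      Sum.elim (quadraticPoly M D G H z *ᵥ u) 0 := by
  rw [nullVectorLift_apply, linearizationPencil_mulVec_elim, mulVec_smul H, sub_self]
  simp only [quadraticPoly, add_mulVec, smul_mulVec, mulVec_smul, mulVec_mulVec, smul_add,
    smul_smul, sq]

theorem comap_nullVectorLift_ker_linearizationPencil (z : R) :
    (linearizationPencil M D G H z).mulVecLin.ker.comap (nullVectorLift H z) =
      (quadraticPoly M D G H z).mulVecLin.ker := by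
  ext u
  simp [linearizationPencil_mulVec_nullVectorLift, sumElim_eq_zero_iff]

theorem ker_linearizationPencil_le_range_nullVectorLift {z : R} (hz : IsUnit z) :
    (linearizationPencil M D G H z).mulVecLin.ker ≤ (nullVectorLift H z).range := by
  intro w hw
  obtain ⟨x, y, rfl⟩ : ∃ x y, w = Sum.elim x y := ⟨_, _, (Sum.elim_comp_inl_inr w).symm⟩
  have hxy : H *ᵥ x = z • y := by
    rw [LinearMap.mem_ker, mulVecLin_apply, linearizationPencil_mulVec_elim,
      sumElim_eq_zero_iff] at hw
    exact sub_eq_zero.mp hw.2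
  obtain ⟨c, rfl⟩ := hz
  refine ⟨c⁻¹ • x, ?_⟩
  rw [nullVectorLift_apply, mulVec_smul, hxy, ← Units.smul_def, ← Units.smul_def, smul_inv_smul,
    inv_smul_smul]

/-- The isomorphism `u ↦ (z u, H u)` from the kernel of `quadraticPoly M D G H z` onto the kernel of
`linearizationPencil M D G H z`, for invertible `z`. -/
noncomputable def kerQuadraticPolyEquiv {z : R} (hz : IsUnit z) :
    (quadraticPoly M D G H z).mulVecLin.ker ≃ₗ[R] (linearizationPencil M D G H z).mulVecLin.ker :=
  (LinearEquiv.ofEq _ _ (comap_nullVectorLift_ker_linearizationPencil M D G H z).symm).trans <|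
    Submodule.comap_equiv_self_of_inj_of_le (nullVectorLift_injective H (hz.isSMulRegular R))
      (ker_linearizationPencil_le_range_nullVectorLift M D G H hz)

theorem coe_kerQuadraticPolyEquiv_apply {z : R} (hz : IsUnit z)
    (u : (quadraticPoly M D G H z).mulVecLin.ker) :
    (kerQuadraticPolyEquiv M D G H hz u : m ⊕ k → R) =
      Sum.elim (z • (u : m → R)) (H *ᵥ (u : m → R)) :=
  nullVectorLift_apply H z u

theorem stmt1_general {z : R} (hz : IsUnit z) :
    (∃ e : (quadraticPoly M D G H z).mulVecLin.ker ≃ₗ[R]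
        (linearizationPencil M D G H z).mulVecLin.ker,
      ∀ u : (quadraticPoly M D G H z).mulVecLin.ker,
        (e u : m ⊕ k → R) = Sum.elim (z • (u : m → R)) (H *ᵥ (u : m → R))) ∧
    Module.finrank R (quadraticPoly M D G H z).mulVecLin.ker =
      Module.finrank R (linearizationPencil M D G H z).mulVecLin.ker :=
  ⟨⟨kerQuadraticPolyEquiv M D G H hz, coe_kerQuadraticPolyEquiv_apply M D G H hz⟩,
    (kerQuadraticPolyEquiv M D G H hz).finrank_eq⟩

end QuadraticLinearization

/-- For every nonzero `λ₀`, the map `u ↦ (λ₀ u, G* u)` restricts to a linear isomorphism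
from the nullspace of `P(λ₀)` onto the nullspace of `S(λ₀)`; in particular the geometric
multiplicities coincide. -/
theorem stmt1 {n r : ℕ} (hn : 0 < n) (hr : 0 < r) (hrn : r ≤ n)
    (M D : Matrix (Fin n) (Fin n) ℂ) (hM : M.PosDef) (hD : D.PosSemidef)
    (G : Matrix (Fin n) (Fin r) ℂ) (hG : G.rank = r)
    (P : ℂ → Matrix (Fin n) (Fin n) ℂ)
    (hP : ∀ z : ℂ, P z = z ^ 2 • M + z • D + G * Gᴴ)
    (S : ℂ → Matrix (Fin n ⊕ Fin r) (Fin n ⊕ Fin r) ℂ)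
    (hS : ∀ z : ℂ, S z = z • Matrix.fromBlocks M 0 0 (-1) + Matrix.fromBlocks D G Gᴴ 0) :
    ∀ lam : ℂ, lam ≠ 0 →
      (∃ e : LinearMap.ker (P lam).mulVecLin ≃ₗ[ℂ] LinearMap.ker (S lam).mulVecLin,
        ∀ u : LinearMap.ker (P lam).mulVecLin,
          (e u : Fin n ⊕ Fin r → ℂ) =
            Sum.elim (lam • (u : Fin n → ℂ)) (Gᴴ.mulVec (u : Fin n → ℂ))) ∧
      Module.finrank ℂ (LinearMap.ker (P lam).mulVecLin) =
        Module.finrank ℂ (LinearMap.ker (S lam).mulVecLin) := by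
  obtain ⟨rfl, rfl⟩ : P = quadraticPoly M D G Gᴴ ∧ S = linearizationPencil M D G Gᴴ :=
    ⟨funext hP, funext hS⟩
  exact fun _ hlam => stmt1_general M D G Gᴴ hlam.isUnit
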